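/- Let λ be a finite nonzero Borel measure on 𝒯 and let ν be a Borel probability measure on 𝒳 with ν({0}) = 0 that is regularly varying with scaling sequence (a_n) and limit measure μ. Let N be Poisson with mean λ(𝒯), T_1,T_2,… i.i.d. with law λ/λ(𝒯), X_1,X_2,… i.i.d. with law ν, all mutually independent. Let k ≥ 0 be an integer, let r > 0 satisfy μ({x : d(0,x) = r}) = 0, and let f : 𝒯×𝒳 → [0,∞) be bounded continuous with f(t,x) = 0 whenever d(0,x) < r. Then n^{k+1}·E[exp(−Σ_{i=1}^{N} f(T_i, a_n⁻¹•X_i))·1{#{1 ≤ i ≤ N : d(0, a_n⁻¹•X_i) ≥ r} ≥ k+1}] → (1/(k+1)!)·∫_{(𝒯×𝒳)^{k+1}} e^{−Σ_{j=1}^{k+1} f(t_j,x_j)} ∏_{j=1}^{k+1} 1{d(0,x_j) ≥ r} λ(dt_1)μ(dx_1)⋯λ(dt_{k+1})μ(dx_{k+1}) as n → ∞. -/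

import Mathlib

open MeasureTheory Filter Metric Topology

lemma aux_pi_restrict {ι α : Type*} [Fintype ι] [MeasurableSpace α] (m : Measure α) (G : Set α)
    (hG : MeasurableSet G) [IsFiniteMeasure (m.restrict G)] :
    (Measure.pi fun _ : ι => m).restrict (Set.pi Set.univ fun _ => G)
      = Measure.pi fun _ : ι => m.restrict G := by
  symm
  apply Measure.pi_eq
  intro s hs
  have hms : MeasurableSet (Set.pi Set.univ s) := MeasurableSet.univ_pi hs
  rw [Measure.restrict_apply hms, ← Set.pi_inter_distrib]
  have hms' : MeasurableSet (Set.pi Set.univ fun i : ι => s i ∩ G) :=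
    MeasurableSet.univ_pi fun i => (hs i).inter hG
  have hpi : (Measure.pi fun _ : ι => m) (Set.pi Set.univ fun i : ι => s i ∩ G)
      = OuterMeasure.pi (fun _ : ι => m.toOuterMeasure) (Set.pi Set.univ fun i : ι => s i ∩ G) := by
    rw [Measure.pi, toMeasure_apply _ _ hms']
  simp_rw [Measure.restrict_apply (hs _)]
  rw [hpi]
  apply le_antisymm
  · exact OuterMeasure.pi_pi_le _ _
  · have hle : (Measure.pi fun _ : ι => m.restrict G).toOuterMeasure ≤
        OuterMeasure.pi (fun _ : ι => m.toOuterMeasure) := by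
      rw [OuterMeasure.le_pi]
      intro t _
      change (Measure.pi fun _ : ι => m.restrict G) (Set.pi Set.univ t) ≤ _
      rw [Measure.pi_pi]
      exact Finset.prod_le_prod' fun i _ => Measure.restrict_apply_le _ _
    refine le_trans (le_of_eq ?_) (hle _)
    change _ = (Measure.pi fun _ : ι => m.restrict G) _
    rw [Measure.pi_pi]
    refine Finset.prod_congr rfl fun i _ => ?_
    rw [Measure.restrict_apply ((hs i).inter hG), Set.inter_assoc, Set.inter_self]

lemma aux_sum_choose (Λ L : ℝ) (k : ℕ) :
    ∑' j : ℕ, Real.exp (-Λ) * Λ ^ j / (j.factorial : ℝ) * ((j.choose (k + 1) : ℝ) * L ^ (k + 1))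
      = (((k + 1).factorial : ℝ))⁻¹ * (Λ * L) ^ (k + 1) := by
  apply HasSum.tsum_eq
  rw [← hasSum_nat_add_iff' (k + 1)]
  have h0 : ∑ j ∈ Finset.range (k + 1),
      Real.exp (-Λ) * Λ ^ j / (j.factorial : ℝ) * ((j.choose (k + 1) : ℝ) * L ^ (k + 1)) = 0 := by
    refine Finset.sum_eq_zero fun j hj => ?_
    rw [Nat.choose_eq_zero_of_lt (Finset.mem_range.1 hj)]; simp
  rw [h0, sub_zero]
  have hexp : HasSum (fun i : ℕ => Λ ^ i / (i.factorial : ℝ)) (Real.exp Λ) := by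
    rw [Real.exp_eq_exp_ℝ]; exact NormedSpace.expSeries_div_hasSum_exp Λ
  have := hexp.mul_left (Real.exp (-Λ) * ((((k + 1).factorial : ℝ))⁻¹ * (Λ * L) ^ (k + 1)))
  convert this using 1
  · rfl
  · funext i
    have hc : (((i + (k + 1)).choose (k + 1) : ℕ) : ℝ) * ((i.factorial : ℝ) * ((k+1).factorial : ℝ))
        = ((i + (k + 1)).factorial : ℝ) := by
      have := Nat.add_choose_mul_factorial_mul_factorial i (k + 1)
      rw [← this]
      rw [← Nat.choose_symm_add]; push_cast; ring
    have h1 : (i.factorial : ℝ) ≠ 0 := by positivity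
    have h2 : ((k+1).factorial : ℝ) ≠ 0 := by positivity
    have h3 : ((i + (k + 1)).factorial : ℝ) ≠ 0 := by positivity
    field_simp
    rw [← hc]; ring
  · rw [mul_right_comm, ← Real.exp_add]; simp

lemma aux_series (Λ : ℝ) (hΛ : 0 ≤ Λ) (k : ℕ) (g p : ℕ → ℝ) (L M : ℝ)
    (hg0 : ∀ n, 0 ≤ g n) (hg1 : ∀ n, g n ≤ 1) (hp0 : ∀ n, 0 ≤ p n) (hp1 : ∀ n, p n ≤ 1)
    (hg : Tendsto (fun n : ℕ => (n : ℝ) * g n) atTop (𝓝 L))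
    (hp : Tendsto (fun n : ℕ => (n : ℝ) * p n) atTop (𝓝 M)) :
    Tendsto (fun n : ℕ => (n : ℝ) ^ (k + 1) *
      ∑' j : ℕ, Real.exp (-Λ) * Λ ^ j / (j.factorial : ℝ) *
        ∑ m ∈ Finset.range (j + 1), (j.choose m : ℝ) *
          (if k + 1 ≤ m then g n ^ m * (1 - p n) ^ (j - m) else 0))
      atTop (𝓝 ((((k + 1).factorial : ℝ))⁻¹ * (Λ * L) ^ (k + 1))) := by
  have hto0 : ∀ (q : ℕ → ℝ) (Q : ℝ), Tendsto (fun n : ℕ => (n : ℝ) * q n) atTop (𝓝 Q) →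
      Tendsto q atTop (𝓝 0) := by
    intro q Q h
    have h1 := h.mul (tendsto_inv_atTop_nhds_zero_nat (𝕜 := ℝ))
    rw [mul_zero] at h1
    refine h1.congr' ?_
    filter_upwards [eventually_gt_atTop 0] with n hn
    have : (n : ℝ) ≠ 0 := by positivity
    field_simp
  have hg' := hto0 g L hg
  have hp' := hto0 p M hp
  rw [← aux_sum_choose]
  simp_rw [← tsum_mul_left]
  obtain ⟨K, hK⟩ := hg.bddAbove_range
  have hK : ∀ n : ℕ, (n : ℝ) * g n ≤ K := fun n => hK ⟨n, rfl⟩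
  have hK0 : 0 ≤ K := by simpa using hK 0
  refine tendsto_tsum_of_dominated_convergence
    (bound := fun j => Real.exp (-Λ) * K ^ (k + 1) * ((2 * Λ) ^ j / (j.factorial : ℝ))) ?_ ?_ ?_
  · exact (Real.summable_pow_div_factorial (2 * Λ)).mul_left _
  · intro j
    have : ∀ n : ℕ, (n : ℝ) ^ (k + 1) * (Real.exp (-Λ) * Λ ^ j / (j.factorial : ℝ) *
        ∑ m ∈ Finset.range (j + 1), (j.choose m : ℝ) *
          (if k + 1 ≤ m then g n ^ m * (1 - p n) ^ (j - m) else 0))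
        = Real.exp (-Λ) * Λ ^ j / (j.factorial : ℝ) *
        ∑ m ∈ Finset.range (j + 1), (j.choose m : ℝ) *
          (if k + 1 ≤ m then (n * g n) ^ (k + 1) * g n ^ (m - (k + 1)) * (1 - p n) ^ (j - m)
            else 0) := by
      intro n
      rw [mul_left_comm, Finset.mul_sum]
      congr 1
      refine Finset.sum_congr rfl fun m _ => ?_
      split_ifs with h
      · obtain ⟨d, rfl⟩ := Nat.exists_eq_add_of_le h
        simp only [Nat.add_sub_cancel_left]; ring
      · simp
    simp_rw [this]
    refine Tendsto.const_mul _ ?_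
    have hlim : ((j.choose (k + 1) : ℝ) * L ^ (k + 1)) = ∑ m ∈ Finset.range (j + 1),
        (j.choose m : ℝ) * (if k + 1 ≤ m then L ^ (k + 1) * 0 ^ (m - (k + 1)) * (1 - 0) ^ (j - m)
            else 0) := by
      by_cases hj : k + 1 ≤ j
      · rw [Finset.sum_eq_single (k + 1)]
        · simp
        · intro m _ hm
          split_ifs with h
          · rw [zero_pow (by omega)]; simp
          · simp
        · intro h; exact absurd (Finset.mem_range.2 (by omega)) h
      · rw [Nat.choose_eq_zero_of_lt (by omega), Finset.sum_eq_zero]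
        · simp
        · intro m hm
          rw [if_neg (by have := Finset.mem_range.1 hm; omega), mul_zero]
    rw [hlim]
    refine tendsto_finsetSum _ fun m _ => Tendsto.const_mul _ ?_
    split_ifs with h
    · exact ((hg.pow _).mul (hg'.pow _)).mul ((tendsto_const_nhds.sub hp').pow _)
    · exact tendsto_const_nhds
  · refine Eventually.of_forall fun n j => ?_
    have hnn : 0 ≤ ∑ m ∈ Finset.range (j + 1), (j.choose m : ℝ) *
          (if k + 1 ≤ m then g n ^ m * (1 - p n) ^ (j - m) else 0) := by
      refine Finset.sum_nonneg fun m _ => mul_nonneg (by positivity) ?_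
      split_ifs
      · exact mul_nonneg (pow_nonneg (hg0 n) _) (pow_nonneg (sub_nonneg.2 (hp1 n)) _)
      · exact le_rfl
    rw [Real.norm_of_nonneg (by positivity), mul_left_comm]
    have hb : (n : ℝ) ^ (k + 1) * ∑ m ∈ Finset.range (j + 1), (j.choose m : ℝ) *
          (if k + 1 ≤ m then g n ^ m * (1 - p n) ^ (j - m) else 0) ≤ K ^ (k + 1) * 2 ^ j := by
      have h2 : (2 : ℝ) ^ j = ∑ m ∈ Finset.range (j + 1), (j.choose m : ℝ) := by
        have := Nat.sum_range_choose j
        exact_mod_cast this.symm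
      rw [h2, Finset.mul_sum, Finset.mul_sum]
      refine Finset.sum_le_sum fun m _ => ?_
      rw [mul_left_comm, mul_comm (K ^ (k + 1))]
      refine mul_le_mul_of_nonneg_left ?_ (by positivity)
      split_ifs with h
      · have e1 : (1 - p n) ^ (j - m) ≤ 1 :=
          pow_le_one₀ (sub_nonneg.2 (hp1 n)) (by linarith [hp0 n])
        have e2 : g n ^ m ≤ g n ^ (k + 1) := pow_le_pow_of_le_one (hg0 n) (hg1 n) h
        calc (n : ℝ) ^ (k + 1) * (g n ^ m * (1 - p n) ^ (j - m))
            ≤ (n : ℝ) ^ (k + 1) * (g n ^ (k + 1) * 1) := by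
              refine mul_le_mul_of_nonneg_left ?_ (by positivity)
              exact mul_le_mul e2 e1 (pow_nonneg (sub_nonneg.2 (hp1 n)) _)
                (pow_nonneg (hg0 n) _)
          _ = (n * g n) ^ (k + 1) := by ring
          _ ≤ K ^ (k + 1) := pow_le_pow_left₀ (mul_nonneg (by positivity) (hg0 n)) (hK n) _
      · simp only [mul_zero]; positivity
    calc _ ≤ Real.exp (-Λ) * Λ ^ j / (j.factorial : ℝ) * (K ^ (k + 1) * 2 ^ j) :=
          mul_le_mul_of_nonneg_left hb (by positivity)
      _ = _ := by rw [mul_pow]; ring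

/-- integral of truncated product under iid law -/
lemma aux_iid {α : Type*} [MeasurableSpace α] (ρ : Measure α) [IsProbabilityMeasure ρ]
    (G : Set α) [DecidablePred (· ∈ G)] (hG : MeasurableSet G) (w : α → ℝ) (hw : Measurable w)
    (hwb : ∀ x, |w x| ≤ 1) (j k : ℕ) :
    ∫ z : Fin j → α, (if k + 1 ≤ (Finset.univ.filter fun i => z i ∈ G).card then
        ∏ i, w (z i) else 0) ∂(Measure.pi fun _ => ρ)
      = ∑ m ∈ Finset.range (j + 1), (j.choose m : ℝ) *
          (if k + 1 ≤ m then (∫ x, G.indicator w x ∂ρ) ^ m *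
            (∫ x, Gᶜ.indicator w x ∂ρ) ^ (j - m) else 0) := by
  classical
  have hpt : ∀ z : Fin j → α, (if k + 1 ≤ (Finset.univ.filter fun i => z i ∈ G).card then
        ∏ i, w (z i) else 0) = ∑ S ∈ (Finset.univ : Finset (Fin j)).powerset,
          ((if k + 1 ≤ S.card then 1 else 0) *
            ∏ i, (if i ∈ S then G.indicator w else Gᶜ.indicator w) (z i)) := by
    intro z
    rw [Finset.sum_eq_single (Finset.univ.filter fun i => z i ∈ G)]
    · have : ∏ i, w (z i) = ∏ i, (if i ∈ (Finset.univ.filter fun i => z i ∈ G) then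
          G.indicator w else Gᶜ.indicator w) (z i) := by
        refine Finset.prod_congr rfl fun i _ => ?_
        by_cases hi : z i ∈ G <;> simp [hi]
      rw [this]
      split_ifs <;> simp
    · intro S _ hS
      have : ∃ i, ¬ (i ∈ S ↔ z i ∈ G) := by
        by_contra! h
        exact hS (by ext i; simp [h i])
      obtain ⟨i, hi⟩ := this
      rw [Finset.prod_eq_zero (Finset.mem_univ i), mul_zero]
      by_cases h1 : i ∈ S <;> by_cases h2 : z i ∈ G <;> simp_all
    · simp
  simp_rw [hpt]
  rw [integral_finsetSum]
  · simp_rw [integral_const_mul]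
    have : ∀ S : Finset (Fin j), ∫ z : Fin j → α,
        ∏ i, (if i ∈ S then G.indicator w else Gᶜ.indicator w) (z i) ∂(Measure.pi fun _ => ρ)
        = (∫ x, G.indicator w x ∂ρ) ^ S.card * (∫ x, Gᶜ.indicator w x ∂ρ) ^ (j - S.card) := by
      intro S
      rw [integral_fintype_prod_eq_prod (fun i : Fin j => (if i ∈ S then G.indicator w else Gᶜ.indicator w))]
      have : ∀ i : Fin j, ∫ x, (if i ∈ S then G.indicator w else Gᶜ.indicator w) x ∂ρ
          = if i ∈ S then ∫ x, G.indicator w x ∂ρ else ∫ x, Gᶜ.indicator w x ∂ρ := by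
        intro i; split_ifs <;> rfl
      simp_rw [this]
      rw [Finset.prod_ite, Finset.prod_const, Finset.prod_const]
      congr 2
      · congr 1; ext; simp
      · rw [Finset.filter_not, Finset.card_sdiff_of_subset (Finset.filter_subset _ _)]
        simp
    simp_rw [this]
    have h := Finset.sum_powerset_apply_card (x := (Finset.univ : Finset (Fin j))) (fun m => (if k + 1 ≤ m then (1:ℝ) else 0) *
      ((∫ x, G.indicator w x ∂ρ) ^ m * (∫ x, Gᶜ.indicator w x ∂ρ) ^ (j - m)))
    rw [h]
    simp
  · intro S _
    refine Integrable.const_mul ?_ _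
    refine Integrable.of_bound (C := 1) ?_ ?_
    · refine Measurable.aestronglyMeasurable ?_
      refine Finset.measurable_prod _ fun i _ => ?_
      split_ifs
      · exact (hw.indicator hG).comp (measurable_pi_apply i)
      · exact (hw.indicator hG.compl).comp (measurable_pi_apply i)
    · refine Eventually.of_forall fun z => ?_
      rw [norm_prod]
      refine Finset.prod_le_one (fun _ _ => norm_nonneg _) fun i _ => ?_
      split_ifs
      · exact (norm_indicator_le_norm_self _ _).trans (hwb _)
      · exact (norm_indicator_le_norm_self _ _).trans (hwb _)

lemma aux_clamp_bd (y : ℝ) : |max 0 (min 1 y)| ≤ 1 := by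
  rw [abs_of_nonneg (le_max_left _ _)]
  exact max_le zero_le_one (min_le_left _ _)

lemma aux_ball {X : Type*} [MetricSpace X] [MeasurableSpace X] [BorelSpace X]
    (x0 : X) (s : ℕ → X → X) (hs : ∀ n, Measurable (s n))
    (ν : Measure X) [IsProbabilityMeasure ν] (μ : Measure X)
    (hμFin : ∀ ρ > (0 : ℝ), μ {x | ρ ≤ dist x0 x} ≠ ⊤)
    (hRV : ∀ h : X → ℝ, Continuous h → (∃ C, ∀ x, |h x| ≤ C) →
      (∃ ρ > (0 : ℝ), ∀ x, dist x0 x < ρ → h x = 0) →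
      Tendsto (fun n : ℕ => (n : ℝ) * ∫ x, h (s n x) ∂ν) atTop (𝓝 (∫ x, h x ∂μ)))
    (r : ℝ) (hr : 0 < r) (hrcont : μ {x | dist x0 x = r} = 0) :
    Tendsto (fun n : ℕ => (n : ℝ) * ∫ x, {x | r ≤ dist x0 x}.indicator (fun _ => (1 : ℝ)) (s n x) ∂ν)
      atTop (𝓝 (∫ x, {x | r ≤ dist x0 x}.indicator (fun _ => (1 : ℝ)) x ∂μ)) := by
  set G : Set X := {x | r ≤ dist x0 x} with hGdef
  have hG : MeasurableSet G := measurableSet_le measurable_const (by fun_prop)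
  have hG2 : MeasurableSet {x | r / 2 ≤ dist x0 x} :=
    measurableSet_le measurable_const (by fun_prop)
  let h : ℝ → ℝ → X → ℝ := fun c δ x => max 0 (min 1 ((dist x0 x - c) / δ))
  have hcont : ∀ c δ, Continuous (h c δ) := fun c δ => by
    simp only [h]; fun_prop
  have hbd : ∀ c δ x, |h c δ x| ≤ 1 := fun c δ x => aux_clamp_bd _
  have hzero : ∀ c δ x, 0 < δ → dist x0 x ≤ c → h c δ x = 0 := by
    intro c δ x hδ hx
    refine max_eq_left ((min_le_right _ _).trans ?_)
    exact div_nonpos_of_nonpos_of_nonneg (by linarith) hδ.le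
  have hone : ∀ c δ x, 0 < δ → c + δ ≤ dist x0 x → h c δ x = 1 := by
    intro c δ x hδ hx
    have : 1 ≤ (dist x0 x - c) / δ := by rw [le_div_iff₀ hδ]; linarith
    simp only [h]
    rw [min_eq_left this]; simp
  have hconv : ∀ c δ, 0 < δ → 0 < c →
      Tendsto (fun n : ℕ => (n : ℝ) * ∫ x, h c δ (s n x) ∂ν) atTop (𝓝 (∫ x, h c δ x ∂μ)) :=
    fun c δ hδ hc => hRV _ (hcont c δ) ⟨1, hbd c δ⟩
      ⟨c, hc, fun x hx => hzero c δ x hδ hx.le⟩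
  have hbint : Integrable ({x | r / 2 ≤ dist x0 x}.indicator (fun _ => (1 : ℝ))) μ := by
    rw [integrable_indicator_iff hG2]
    exact integrableOn_const (hμFin _ (by linarith))
  have hint : ∀ c δ n, Integrable (fun x => h c δ (s n x)) ν := fun c δ n =>
    Integrable.of_bound (C := 1) ((hcont c δ).measurable.comp (hs n)).aestronglyMeasurable
      (Eventually.of_forall fun x => hbd c δ _)
  have hGint : ∀ n, Integrable (fun x => G.indicator (fun _ => (1 : ℝ)) (s n x)) ν := fun n =>
    Integrable.of_bound (C := 1)
      (((measurable_const.indicator hG).comp (hs n)).aestronglyMeasurable)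
      (Eventually.of_forall fun x => (norm_indicator_le_norm_self _ _).trans (by simp))
  -- dominated convergence in δ
  have hdom : ∀ c : ℝ → ℝ, (∀ᶠ δ in 𝓝[>] (0 : ℝ), r / 2 ≤ c δ) →
      (∀ x, dist x0 x ≠ r →
        ∀ᶠ δ in 𝓝[>] (0 : ℝ), h (c δ) δ x = G.indicator (fun _ => (1 : ℝ)) x) →
      Tendsto (fun δ => ∫ x, h (c δ) δ x ∂μ) (𝓝[>] (0 : ℝ))
        (𝓝 (∫ x, G.indicator (fun _ => (1 : ℝ)) x ∂μ)) := by
    intro c hc hx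
    refine tendsto_integral_filter_of_dominated_convergence
      ({x | r / 2 ≤ dist x0 x}.indicator (fun _ => (1 : ℝ))) ?_ ?_ hbint ?_
    · exact Eventually.of_forall fun δ => (hcont _ _).measurable.aestronglyMeasurable
    · filter_upwards [hc, self_mem_nhdsWithin] with δ hδ hδ0
      refine Eventually.of_forall fun x => ?_
      by_cases hxx : r / 2 ≤ dist x0 x
      · rw [Set.indicator_of_mem (s := {x | r / 2 ≤ dist x0 x}) (by exact hxx)]; exact hbd _ _ _
      · rw [hzero _ _ _ hδ0 (by linarith)]; simp [hxx]
    · have : ∀ᵐ x ∂μ, dist x0 x ≠ r := by rw [ae_iff]; simpa using hrcont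
      filter_upwards [this] with x hxr
      exact tendsto_const_nhds.congr' ((hx x hxr).mono fun δ h => h.symm)
  have hsmall : ∀ ε > (0 : ℝ), ∀ᶠ δ in 𝓝[>] (0 : ℝ), 0 < δ ∧ δ < ε := fun ε hε => by
    filter_upwards [Ioo_mem_nhdsGT hε] with δ hδ using hδ
  have hup := hdom (fun δ => r - δ)
    ((hsmall (r / 2) (by linarith)).mono fun δ h => by linarith [h.2]) (by
      intro x hx
      rcases lt_or_gt_of_ne hx with h1 | h1
      · filter_upwards [hsmall (r - dist x0 x) (by linarith)] with δ hδ
        rw [hzero _ _ _ hδ.1 (by linarith [hδ.2]), Set.indicator_of_notMem]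
        simp only [hGdef, Set.mem_ofPred_eq, not_le]; exact h1
      · filter_upwards [hsmall 1 one_pos] with δ hδ
        rw [hone _ _ _ hδ.1 (by linarith), Set.indicator_of_mem]
        exact h1.le)
  have hlo := hdom (fun δ => r)
    (Eventually.of_forall fun δ => by linarith) (by
      intro x hx
      rcases lt_or_gt_of_ne hx with h1 | h1
      · filter_upwards [hsmall 1 one_pos] with δ hδ
        rw [hzero _ _ _ hδ.1 h1.le, Set.indicator_of_notMem]
        simp only [hGdef, Set.mem_ofPred_eq, not_le]; exact h1
      · filter_upwards [hsmall (dist x0 x - r) (by linarith)] with δ hδ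
        rw [hone _ _ _ hδ.1 (by linarith [hδ.2]), Set.indicator_of_mem]
        exact h1.le)
  rw [tendsto_order]
  constructor
  · intro b hb
    obtain ⟨δ, hδ1, hδ2⟩ := ((hlo.eventually_const_lt hb).and (hsmall 1 one_pos)).exists
    filter_upwards [(hconv r δ hδ2.1 hr).eventually_const_lt hδ1] with n hn
    refine hn.trans_le (mul_le_mul_of_nonneg_left ?_ (by positivity))
    refine integral_mono (hint _ _ _) (hGint n) fun x => ?_
    by_cases hx : s n x ∈ G
    · simp only [Set.indicator_of_mem hx]; exact (abs_le.1 (hbd _ _ _)).2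
    · simp only [Set.indicator_of_notMem hx]
      exact (hzero _ _ _ hδ2.1 (not_le.1 hx).le).le
  · intro b hb
    obtain ⟨δ, hδ1, hδ2⟩ := ((hup.eventually_lt_const hb).and (hsmall r hr)).exists
    filter_upwards [(hconv (r - δ) δ hδ2.1 (by linarith [hδ2.2])).eventually_lt_const hδ1] with n hn
    refine lt_of_le_of_lt (mul_le_mul_of_nonneg_left ?_ (by positivity)) hn
    refine integral_mono (hGint n) (hint _ _ _) fun x => ?_
    by_cases hx : s n x ∈ G
    · simp only [Set.indicator_of_mem hx]
      rw [hone _ _ _ hδ2.1 (by have : r ≤ dist x0 (s n x) := hx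
                               linarith)]
    · simp only [Set.indicator_of_notMem hx]; exact le_max_left _ _

lemma aux_glim {T X : Type*} [MetricSpace T] [TopologicalSpace.SeparableSpace T]
    [MeasurableSpace T] [BorelSpace T]
    [MetricSpace X] [TopologicalSpace.SeparableSpace X] [MeasurableSpace X] [BorelSpace X]
    (x0 : X) (s : ℕ → X → X) (hs : ∀ n, Measurable (s n))
    (lam : Measure T) [IsFiniteMeasure lam]
    (ν : Measure X) [IsProbabilityMeasure ν] (μ : Measure X)
    (hμFin : ∀ ρ > (0 : ℝ), μ {x | ρ ≤ dist x0 x} ≠ ⊤)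
    (hRV : ∀ h : X → ℝ, Continuous h → (∃ C, ∀ x, |h x| ≤ C) →
      (∃ ρ > (0 : ℝ), ∀ x, dist x0 x < ρ → h x = 0) →
      Tendsto (fun n : ℕ => (n : ℝ) * ∫ x, h (s n x) ∂ν) atTop (𝓝 (∫ x, h x ∂μ)))
    (r : ℝ) (hr : 0 < r) (hrcont : μ {x | dist x0 x = r} = 0)
    (f : T × X → ℝ) (hfc : Continuous f) (hf0 : ∀ z, 0 ≤ f z)
    (hfvan : ∀ t x, dist x0 x < r → f (t, x) = 0) :
    Tendsto (fun n : ℕ => (n : ℝ) * ∫ z, {z : T × X | r ≤ dist x0 (s n z.2)}.indicator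
        (fun z => Real.exp (-f (z.1, s n z.2))) z ∂(lam.prod ν))
      atTop (𝓝 (∫ z, Real.exp (-f z) ∂(lam.prod (μ.restrict {x | r ≤ dist x0 x})))) := by
  set G : Set X := {x | r ≤ dist x0 x} with hGdef
  have : SecondCountableTopology T := UniformSpace.secondCountable_of_separable T
  have : SecondCountableTopology X := UniformSpace.secondCountable_of_separable X
  have hG : MeasurableSet G := measurableSet_le measurable_const (by fun_prop)
  have : IsFiniteMeasure (μ.restrict G) := ⟨by
    rw [Measure.restrict_apply_univ]; exact (hμFin r hr).lt_top⟩
  have hfm : Measurable f := hfc.measurable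
  have hp := aux_ball x0 s hs ν μ hμFin hRV r hr hrcont
  have hexp1 : ∀ z, Real.exp (-f z) ≤ 1 := fun z => Real.exp_le_one_iff.2 (by linarith [hf0 z])
  have hm1 : Measurable fun z : T × X => Real.exp (-f z) := by fun_prop
  have hmn : ∀ n, Measurable ({z : T × X | r ≤ dist x0 (s n z.2)}.indicator
        (fun z => Real.exp (-f (z.1, s n z.2)))) := by
    intro n
    refine Measurable.indicator ?_ ?_
    · exact hm1.comp (measurable_fst.prodMk ((hs n).comp measurable_snd))
    · exact (hs n).comp measurable_snd hG
  have hbn : ∀ n z, ‖({z : T × X | r ≤ dist x0 (s n z.2)}.indicator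
        (fun z => Real.exp (-f (z.1, s n z.2)))) z‖ ≤ 1 := fun n z =>
    (norm_indicator_le_norm_self _ _).trans (by
      rw [Real.norm_of_nonneg (Real.exp_nonneg _)]; exact hexp1 _)
  rw [integral_prod _ (Integrable.of_bound (C := 1) hm1.aestronglyMeasurable
    (Eventually.of_forall fun z => by
      rw [Real.norm_of_nonneg (Real.exp_nonneg _)]; exact hexp1 _))]
  have hfub : ∀ n, ∫ z, {z : T × X | r ≤ dist x0 (s n z.2)}.indicator
        (fun z => Real.exp (-f (z.1, s n z.2))) z ∂(lam.prod ν)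
      = ∫ t, ∫ x, G.indicator (fun x => Real.exp (-f (t, x))) (s n x) ∂ν ∂lam := by
    intro n
    rw [integral_prod _ (Integrable.of_bound (C := 1) (hmn n).aestronglyMeasurable
      (Eventually.of_forall (hbn n)))]
    rfl
  simp_rw [hfub]
  refine Tendsto.congr (f₁ := fun n : ℕ => ∫ t, (n : ℝ) *
    ∫ x, G.indicator (fun x => Real.exp (-f (t, x))) (s n x) ∂ν ∂lam)
    (fun n => integral_const_mul _ _) ?_
  obtain ⟨K, hK⟩ := hp.bddAbove_range
  have hK : ∀ n : ℕ, (n : ℝ) * ∫ x, G.indicator (fun _ => (1 : ℝ)) (s n x) ∂ν ≤ K :=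
    fun n => hK ⟨n, rfl⟩
  have hGint : ∀ n, Integrable (fun x => G.indicator (fun _ => (1 : ℝ)) (s n x)) ν := fun n =>
    Integrable.of_bound (C := 1)
      (((measurable_const.indicator hG).comp (hs n)).aestronglyMeasurable)
      (Eventually.of_forall fun x => (norm_indicator_le_norm_self _ _).trans (by simp))
  have hGtint : ∀ n t, Integrable (fun x => G.indicator (fun x => Real.exp (-f (t, x))) (s n x)) ν :=
    fun n t => Integrable.of_bound (C := 1)
      ((((hm1.comp measurable_prodMk_left).indicator hG).comp (hs n)).aestronglyMeasurable)
      (Eventually.of_forall fun x => (norm_indicator_le_norm_self _ _).trans (by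
        rw [Real.norm_of_nonneg (Real.exp_nonneg _)]; exact hexp1 _))
  refine tendsto_integral_of_dominated_convergence (fun _ => K) ?_ (integrable_const _) ?_ ?_
  · intro n
    have : StronglyMeasurable fun t => ∫ x, G.indicator (fun x => Real.exp (-f (t, x))) (s n x) ∂ν :=
      (hmn n).stronglyMeasurable.integral_prod_right'
    exact (this.const_mul _).aestronglyMeasurable
  · intro n
    refine Eventually.of_forall fun t => ?_
    rw [Real.norm_of_nonneg (mul_nonneg (by positivity) (integral_nonneg fun x =>
      Set.indicator_nonneg (fun _ _ => Real.exp_nonneg _) _))]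
    refine le_trans (mul_le_mul_of_nonneg_left ?_ (by positivity)) (hK n)
    refine integral_mono (hGtint n t) (hGint n) fun x => ?_
    exact Set.indicator_le_indicator (hexp1 _)
  · refine Eventually.of_forall fun t => ?_
    have hcont : Continuous fun x => Real.exp (-f (t, x)) - 1 := by fun_prop
    have hbd : ∀ x, |Real.exp (-f (t, x)) - 1| ≤ 1 := fun x => by
      rw [abs_le]; constructor <;> linarith [hexp1 (t, x), Real.exp_nonneg (-f (t, x))]
    have h1 := hRV (fun x => Real.exp (-f (t, x)) - 1) hcont ⟨1, hbd⟩
      ⟨r, hr, fun x hx => by rw [hfvan t x hx]; simp⟩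
    have h2 := h1.add hp
    have hdec : ∀ x, G.indicator (fun x => Real.exp (-f (t, x))) x
        = (Real.exp (-f (t, x)) - 1) + G.indicator (fun _ => (1 : ℝ)) x := by
      intro x
      by_cases hx : x ∈ G
      · simp [hx]
      · have : f (t, x) = 0 := hfvan t x (not_le.1 hx)
        simp [hx, this]
    have hi1 : Integrable (fun x => Real.exp (-f (t, x)) - 1) μ := by
      have : (fun x => Real.exp (-f (t, x)) - 1)
          = G.indicator (fun x => Real.exp (-f (t, x)) - 1) := by
        funext x
        by_cases hx : x ∈ G
        · simp [hx]
        · have : f (t, x) = 0 := hfvan t x (not_le.1 hx)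
          simp [hx, this]
      rw [this, integrable_indicator_iff hG]
      exact Integrable.of_bound (C := 1) hcont.measurable.aestronglyMeasurable
        (Eventually.of_forall hbd)
    have hi2 : Integrable (G.indicator (fun _ => (1 : ℝ))) μ := by
      rw [integrable_indicator_iff hG]; exact integrableOn_const (hμFin _ hr)
    rw [← integral_add hi1 hi2] at h2
    simp_rw [← hdec] at h2
    rw [integral_indicator hG] at h2
    refine h2.congr fun n => ?_
    rw [← mul_add, ← integral_add _ (hGint n)]
    · simp_rw [← hdec]
    · exact Integrable.of_bound (C := 1) (hcont.measurable.comp (hs n)).aestronglyMeasurable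
        (Eventually.of_forall fun x => hbd _)

lemma aux_law {T X Ω : Type*} [MeasurableSpace T] [MeasurableSpace X] [MeasurableSpace Ω]
    (lam' : Measure T) [IsProbabilityMeasure lam'] (ν : Measure X) [IsProbabilityMeasure ν]
    (P : Measure Ω) [IsProbabilityMeasure P] (N : Ω → ℕ)
    (Tt : ℕ → Ω → T) (hTmeas : ∀ i, Measurable (Tt i))
    (Xx : ℕ → Ω → X) (hXmeas : ∀ i, Measurable (Xx i))
    (hTlaw : ∀ i, Measure.map (Tt i) P = lam')
    (hXlaw : ∀ i, Measure.map (Xx i) P = ν)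
    (hIndep : ∀ (j n : ℕ) (A : ℕ → Set T) (B : ℕ → Set X),
      (∀ i, MeasurableSet (A i)) → (∀ i, MeasurableSet (B i)) →
      P ({ω | N ω = j} ∩ ⋂ i ∈ Finset.range n, ({ω | Tt i ω ∈ A i} ∩ {ω | Xx i ω ∈ B i}))
        = P {ω | N ω = j} *
          ∏ i ∈ Finset.range n, (P {ω | Tt i ω ∈ A i} * P {ω | Xx i ω ∈ B i}))
    (j : ℕ) (hj : P {ω | N ω = j} ≠ 0) :
    Measure.map (fun ω (i : Fin j) => (Tt i ω, Xx i ω)) (P.restrict {ω | N ω = j})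
      = P {ω | N ω = j} • Measure.pi fun _ => lam'.prod ν := by
  have hfin : P {ω | N ω = j} ≠ ⊤ := measure_ne_top _ _
  have hZ : Measurable (fun ω (i : Fin j) => (Tt i ω, Xx i ω)) :=
    measurable_pi_lambda _ fun i => (hTmeas i).prodMk (hXmeas i)
  have key : (Measure.pi fun _ : Fin j => lam'.prod ν) = (P {ω | N ω = j})⁻¹ •
      Measure.map (fun ω (i : Fin j) => (Tt i ω, Xx i ω)) (P.restrict {ω | N ω = j}) := by
    refine Measure.pi_eq_generateFrom
      (C := fun _ => Set.image2 (· ×ˢ ·) {s : Set T | MeasurableSet s} {t : Set X | MeasurableSet t})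
      (fun _ => generateFrom_prod) (fun _ => isPiSystem_prod)
      (fun _ => ⟨fun _ => Set.univ, fun _ => ⟨Set.univ, MeasurableSet.univ, Set.univ,
        MeasurableSet.univ, Set.univ_prod_univ⟩, fun _ => measure_lt_top _ _, Set.iUnion_const _⟩) ?_
    intro S hS
    choose A hA B hB hAB using hS
    have hSm : ∀ i, MeasurableSet (S i) := fun i => by
      rw [← hAB i]; exact (hA i).prod (hB i)
    have hI := hIndep j j (fun i => if h : i < j then A ⟨i, h⟩ else Set.univ)
      (fun i => if h : i < j then B ⟨i, h⟩ else Set.univ)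
      (fun i => by split_ifs with h; exacts [hA _, MeasurableSet.univ])
      (fun i => by split_ifs with h; exacts [hB _, MeasurableSet.univ])
    rw [Finset.prod_range] at hI
    rw [Measure.smul_apply, Measure.map_apply hZ (MeasurableSet.univ_pi hSm),
      Measure.restrict_apply (hZ (MeasurableSet.univ_pi hSm)), Set.inter_comm]
    have hset : {ω | N ω = j} ∩ (fun ω (i : Fin j) => (Tt i ω, Xx i ω)) ⁻¹' Set.univ.pi S
      = {ω | N ω = j} ∩ ⋂ i ∈ Finset.range j,
        ({ω | Tt i ω ∈ (fun i => if h : i < j then A ⟨i, h⟩ else Set.univ) i} ∩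
         {ω | Xx i ω ∈ (fun i => if h : i < j then B ⟨i, h⟩ else Set.univ) i}) := by
      congr 1
      ext ω
      simp only [Set.mem_preimage, Set.mem_univ_pi, ← hAB, Set.mem_prod, Set.mem_iInter,
        Finset.mem_range, Set.mem_inter_iff, Set.mem_ofPred_eq]
      constructor
      · intro h i hi; simpa [hi] using h ⟨i, hi⟩
      · intro h i; simpa using h i i.2
    rw [hset, hI, smul_eq_mul, ← mul_assoc, ENNReal.inv_mul_cancel hj hfin, one_mul]
    refine Finset.prod_congr rfl fun i _ => ?_
    simp only [Fin.is_lt, dite_true, Fin.eta]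
    rw [← hAB i, Measure.prod_prod, ← hTlaw i, ← hXlaw i, Measure.map_apply (hTmeas i) (hA i),
      Measure.map_apply (hXmeas i) (hB i)]
    rfl
  rw [key, smul_smul, ENNReal.mul_inv_cancel hj hfin, one_smul]

lemma aux_decomp {α Ω : Type*} [MeasurableSpace α] [MeasurableSpace Ω]
    (ρ : Measure α) (P : Measure Ω) [IsProbabilityMeasure P] (N : Ω → ℕ) (hN : Measurable N)
    (Z : ℕ → Ω → α) (hZ : ∀ i, Measurable (Z i))
    (hlaw : ∀ j, Measure.map (fun ω (i : Fin j) => Z i ω) (P.restrict {ω | N ω = j})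
      = P {ω | N ω = j} • Measure.pi fun _ => ρ)
    (H : ∀ j, (Fin j → α) → ℝ) (hH : ∀ j, Measurable (H j)) (hHb : ∀ j z, |H j z| ≤ 1) :
    ∫ ω, H (N ω) (fun i => Z i ω) ∂P
      = ∑' j, (P {ω | N ω = j}).toReal * ∫ z, H j z ∂(Measure.pi fun _ => ρ) := by
  have hZm : ∀ j, Measurable (fun ω (i : Fin j) => Z i ω) := fun j =>
    measurable_pi_lambda _ fun i => hZ i
  have hmeas : Measurable fun ω => H (N ω) (fun i => Z i ω) := by
    have h1 : Measurable fun q : ℕ × Ω => H q.1 (fun i => Z i q.2) :=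
      measurable_from_prod_countable_right fun j => (hH j).comp (hZm j)
    exact h1.comp (hN.prodMk measurable_id)
  have hint : Integrable (fun ω => H (N ω) (fun i => Z i ω)) P :=
    Integrable.of_bound (C := 1) hmeas.aestronglyMeasurable (Eventually.of_forall fun ω => hHb _ _)
  have hNm : ∀ j, MeasurableSet {ω | N ω = j} := fun j => hN (measurableSet_singleton j)
  have hU : ⋃ j, {ω | N ω = j} = Set.univ := by ext ω; simp
  have hs := hasSum_integral_iUnion (μ := P) (f := fun ω => H (N ω) (fun i => Z i ω))
    (s := fun j => {ω | N ω = j}) hNm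
    (fun i j hij => Set.disjoint_left.2 fun ω (h1 : N ω = i) (h2 : N ω = j) => hij (h1.symm.trans h2))
    hint.integrableOn
  rw [hU, setIntegral_univ] at hs
  rw [← hs.tsum_eq]
  refine tsum_congr fun j => ?_
  have h1 : ∫ ω in {ω | N ω = j}, H (N ω) (fun i => Z i ω) ∂P
      = ∫ ω in {ω | N ω = j}, H j (fun i => Z i ω) ∂P := by
    refine setIntegral_congr_fun (hNm j) fun ω hω => ?_
    have : N ω = j := hω
    subst this; rfl
  rw [h1, ← integral_map (f := H j) (hZm j).aemeasurable (hH j).aestronglyMeasurable, hlaw j,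
    integral_smul_measure, smul_eq_mul]

lemma aux_sfinite {X : Type*} [MetricSpace X] [MeasurableSpace X] [BorelSpace X]
    (x0 : X) (μ : Measure X)
    (hμFin : ∀ ρ > (0 : ℝ), μ {x | ρ ≤ dist x0 x} ≠ ⊤) : SFinite μ := by
  have h0 : μ = μ.restrict {x0} + μ.restrict {x0}ᶜ :=
    (Measure.restrict_add_restrict_compl (measurableSet_singleton x0)).symm
  have h1 : SFinite (μ.restrict {x0}) := by
    rw [Measure.restrict_singleton]; infer_instance
  have hU : ({x0}ᶜ : Set X) = ⋃ n : ℕ, {x | 1 / ((n : ℝ) + 1) ≤ dist x0 x} := by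
    ext x
    simp only [Set.mem_compl_iff, Set.mem_singleton_iff, Set.mem_iUnion]
    constructor
    · intro hx
      obtain ⟨n, hn⟩ := exists_nat_one_div_lt (dist_pos.2 (Ne.symm hx))
      exact ⟨n, hn.le⟩
    · rintro ⟨n, hn⟩ rfl
      have h2 : 1 / ((n : ℝ) + 1) ≤ dist x x := hn
      rw [dist_self] at h2
      have : 0 < 1 / ((n : ℝ) + 1) := by positivity
      linarith
  have h2 : SigmaFinite (μ.restrict {x0}ᶜ) := by
    refine ⟨⟨⟨fun n : ℕ => {x0} ∪ {x | 1 / ((n : ℝ) + 1) ≤ dist x0 x}, fun _ => trivial,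
      fun n => ?_, ?_⟩⟩⟩
    · refine lt_of_le_of_lt (measure_union_le _ _) ?_
      rw [Measure.restrict_apply (measurableSet_singleton x0), Set.inter_compl_self,
        measure_empty, zero_add]
      exact (Measure.restrict_apply_le _ _).trans_lt (hμFin _ (by positivity)).lt_top
    · rw [← Set.union_iUnion, ← hU, Set.union_compl_self]
  rw [h0]; infer_instance

lemma aux_rhs {T X : Type*} [MeasurableSpace T]
    [MetricSpace X] [MeasurableSpace X] [BorelSpace X]
    (x0 : X) (lam : Measure T) [IsFiniteMeasure lam] (μ : Measure X)
    (hμFin : ∀ ρ > (0 : ℝ), μ {x | ρ ≤ dist x0 x} ≠ ⊤) (k : ℕ) (r : ℝ) (hr : 0 < r)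
    (f : T × X → ℝ) :
    ∫ z : Fin (k + 1) → T × X,
          (Real.exp (-∑ j, f (z j)) * ∏ j, (if r ≤ dist x0 (z j).2 then (1 : ℝ) else 0))
          ∂(Measure.pi fun _ : Fin (k + 1) => lam.prod μ)
      = (∫ z, Real.exp (-f z) ∂(lam.prod (μ.restrict {x | r ≤ dist x0 x}))) ^ (k + 1) := by
  have := aux_sfinite x0 μ hμFin
  have hG : MeasurableSet {x | r ≤ dist x0 x} := measurableSet_le measurable_const (by fun_prop)
  have hGf : IsFiniteMeasure (μ.restrict {x | r ≤ dist x0 x}) := ⟨by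
    rw [Measure.restrict_apply_univ]; exact (hμFin r hr).lt_top⟩
  set G' : Set (T × X) := Set.univ ×ˢ {x | r ≤ dist x0 x} with hG'
  have hG'm : MeasurableSet G' := MeasurableSet.univ.prod hG
  have hres : (lam.prod μ).restrict G' = lam.prod (μ.restrict {x | r ≤ dist x0 x}) := by
    rw [hG', ← Measure.prod_restrict, Measure.restrict_univ]
  have hf' : IsFiniteMeasure ((lam.prod μ).restrict G') := by rw [hres]; infer_instance
  have hpt : ∀ z : Fin (k + 1) → T × X,
      (Real.exp (-∑ j, f (z j)) * ∏ j, (if r ≤ dist x0 (z j).2 then (1 : ℝ) else 0))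
      = (Set.pi Set.univ fun _ => G').indicator (fun z => ∏ j, Real.exp (-f (z j))) z := by
    intro z
    rw [← Finset.sum_neg_distrib, Real.exp_sum]
    by_cases hz : ∀ j, r ≤ dist x0 (z j).2
    · rw [Set.indicator_of_mem]
      · simp [hz]
      · intro j _; exact ⟨trivial, hz j⟩
    · rw [Set.indicator_of_notMem]
      · push Not at hz
        obtain ⟨j, hj⟩ := hz
        refine mul_eq_zero_of_right _ (Finset.prod_eq_zero (Finset.mem_univ j) ?_)
        rw [if_neg (not_le.2 hj)]
      · intro h; exact hz fun j => (h j trivial).2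
  simp_rw [hpt]
  rw [integral_indicator (MeasurableSet.univ_pi fun _ => hG'm), aux_pi_restrict _ _ hG'm,
    integral_fintype_prod_eq_pow (fun z => Real.exp (-f z)), hres]
  simp

/-- Hidden regular variation of marked Poisson point processes, truncated
Laplace-functional form (Theorem 3.1 of the paper, case `k ≥ 0`). -/
theorem stmt_12
    {T : Type*} [MetricSpace T] [CompleteSpace T] [TopologicalSpace.SeparableSpace T]
    [MeasurableSpace T] [BorelSpace T]
    {X : Type*} [MetricSpace X] [CompleteSpace X] [TopologicalSpace.SeparableSpace X]
    [MeasurableSpace X] [BorelSpace X]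
    (x0 : X) (σ : ℝ → X → X)
    (hσc : ContinuousOn (fun p : ℝ × X => σ p.1 p.2) (Set.Ioi (0 : ℝ) ×ˢ Set.univ))
    (hσ1 : ∀ x, σ 1 x = x)
    (hσm : ∀ u v : ℝ, 0 < u → 0 < v → ∀ x, σ u (σ v x) = σ (u * v) x)
    (hσ0 : ∀ u : ℝ, 0 < u → σ u x0 = x0)
    (lam : Measure T) [IsFiniteMeasure lam] (hlam0 : lam ≠ 0)
    (ν : Measure X) [IsProbabilityMeasure ν] (hν0 : ν {x0} = 0)
    (a : ℕ → ℝ) (ha : ∀ n, 0 < a n) (haTop : Tendsto a atTop atTop)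
    (μ : Measure X) (hμ0 : μ ≠ 0)
    (hμFin : ∀ ρ > (0 : ℝ), μ {x | ρ ≤ dist x0 x} ≠ ⊤)
    (hRV : ∀ h : X → ℝ, Continuous h → (∃ C, ∀ x, |h x| ≤ C) →
      (∃ ρ > (0 : ℝ), ∀ x, dist x0 x < ρ → h x = 0) →
      Tendsto (fun n : ℕ => (n : ℝ) * ∫ x, h (σ (a n)⁻¹ x) ∂ν) atTop (𝓝 (∫ x, h x ∂μ)))
    {Ω : Type*} [MeasurableSpace Ω] (P : Measure Ω) [IsProbabilityMeasure P]
    (N : Ω → ℕ) (hNmeas : Measurable N)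
    (Tt : ℕ → Ω → T) (hTmeas : ∀ i, Measurable (Tt i))
    (Xx : ℕ → Ω → X) (hXmeas : ∀ i, Measurable (Xx i))
    (hNlaw : ∀ j : ℕ, P {ω | N ω = j} =
      ENNReal.ofReal (Real.exp (-(lam Set.univ).toReal) * (lam Set.univ).toReal ^ j /
        (Nat.factorial j : ℝ)))
    (hTlaw : ∀ i, Measure.map (Tt i) P = (lam Set.univ)⁻¹ • lam)
    (hXlaw : ∀ i, Measure.map (Xx i) P = ν)
    (hIndep : ∀ (j n : ℕ) (A : ℕ → Set T) (B : ℕ → Set X),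
      (∀ i, MeasurableSet (A i)) → (∀ i, MeasurableSet (B i)) →
      P ({ω | N ω = j} ∩ ⋂ i ∈ Finset.range n, ({ω | Tt i ω ∈ A i} ∩ {ω | Xx i ω ∈ B i}))
        = P {ω | N ω = j} *
          ∏ i ∈ Finset.range n, (P {ω | Tt i ω ∈ A i} * P {ω | Xx i ω ∈ B i}))
    (k : ℕ) (r : ℝ) (hr : 0 < r) (hrcont : μ {x | dist x0 x = r} = 0)
    (f : T × X → ℝ) (hfc : Continuous f) (hf0 : ∀ z, 0 ≤ f z) (hfb : ∃ C, ∀ z, f z ≤ C)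
    (hfvan : ∀ t x, dist x0 x < r → f (t, x) = 0) :
    Tendsto (fun n : ℕ => (n : ℝ) ^ (k + 1) *
        ∫ ω, (if k + 1 ≤ ((Finset.range (N ω)).filter
              (fun i => r ≤ dist x0 (σ (a n)⁻¹ (Xx i ω)))).card then
            Real.exp (-∑ i ∈ Finset.range (N ω), f (Tt i ω, σ (a n)⁻¹ (Xx i ω)))
          else 0) ∂P)
      atTop
      (𝓝 ((Nat.factorial (k + 1) : ℝ)⁻¹ *
        ∫ z : Fin (k + 1) → T × X,
          (Real.exp (-∑ j, f (z j)) * ∏ j, (if r ≤ dist x0 (z j).2 then (1 : ℝ) else 0))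
          ∂(Measure.pi fun _ : Fin (k + 1) => lam.prod μ))) := by
  classical
  have : SecondCountableTopology T := UniformSpace.secondCountable_of_separable T
  have : SecondCountableTopology X := UniformSpace.secondCountable_of_separable X
  rw [aux_rhs x0 lam μ hμFin k r hr f]
  set s : ℕ → X → X := fun n x => σ (a n)⁻¹ x with hsdef
  have hs : ∀ n, Measurable (s n) := by
    intro n
    have : Continuous (s n) := by
      have h1 : Continuous fun x : X => ((a n)⁻¹, x) := by fun_prop
      exact hσc.comp_continuous h1 fun x => ⟨inv_pos.2 (ha n), trivial⟩
    exact this.measurable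
  set Λ : ℝ := (lam Set.univ).toReal with hΛdef
  have hlu : lam Set.univ ≠ 0 := by simpa using hlam0
  have hlt : lam Set.univ ≠ ⊤ := measure_ne_top _ _
  have hΛ : 0 < Λ := ENNReal.toReal_pos hlu hlt
  have hprob : IsProbabilityMeasure ((lam Set.univ)⁻¹ • lam) := ⟨by
    rw [Measure.smul_apply, smul_eq_mul, ENNReal.inv_mul_cancel hlu hlt]⟩
  set lam' : Measure T := (lam Set.univ)⁻¹ • lam with hlam'
  have hPj : ∀ j, (P {ω | N ω = j}).toReal
      = Real.exp (-Λ) * Λ ^ j / (Nat.factorial j : ℝ) := fun j => by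
    rw [hNlaw j, ENNReal.toReal_ofReal (by positivity)]
  have hPj0 : ∀ j, P {ω | N ω = j} ≠ 0 := fun j h => by
    have h1 := hPj j
    rw [h, ENNReal.toReal_zero] at h1
    have : 0 < Real.exp (-Λ) * Λ ^ j / (Nat.factorial j : ℝ) := by positivity
    linarith
  have hlaw : ∀ j, Measure.map (fun ω (i : Fin j) => (Tt i ω, Xx i ω)) (P.restrict {ω | N ω = j})
      = P {ω | N ω = j} • Measure.pi fun _ => lam'.prod ν := fun j =>
    aux_law lam' ν P N Tt hTmeas Xx hXmeas hTlaw hXlaw hIndep j (hPj0 j)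
  have hfm : Measurable f := hfc.measurable
  have hG : MeasurableSet {x | r ≤ dist x0 x} := measurableSet_le measurable_const (by fun_prop)
  set Gn : ℕ → Set (T × X) := fun n => {z | r ≤ dist x0 (s n z.2)} with hGn
  have hGnm : ∀ n, MeasurableSet (Gn n) := fun n => ((hs n).comp measurable_snd) hG
  set w : ℕ → T × X → ℝ := fun n z => Real.exp (-f (z.1, s n z.2)) with hw
  have hwm : ∀ n, Measurable (w n) := fun n =>
    (hfm.comp (measurable_fst.prodMk ((hs n).comp measurable_snd))).neg.exp
  have hw0 : ∀ n z, 0 ≤ w n z := fun n z => Real.exp_nonneg _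
  have hw1 : ∀ n z, w n z ≤ 1 := fun n z => Real.exp_le_one_iff.2 (by linarith [hf0 (z.1, s n z.2)])
  have hwb : ∀ n z, |w n z| ≤ 1 := fun n z => by rw [abs_of_nonneg (hw0 n z)]; exact hw1 n z
  -- the scalar sequences
  set g : ℕ → ℝ := fun n => ∫ z, (Gn n).indicator (w n) z ∂(lam'.prod ν) with hg
  set p : ℕ → ℝ := fun n => ∫ x, {x | r ≤ dist x0 x}.indicator (fun _ => (1 : ℝ)) (s n x) ∂ν with hp
  have hplim := aux_ball x0 s hs ν μ hμFin hRV r hr hrcont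
  have hglim0 := aux_glim x0 s hs lam ν μ hμFin hRV r hr hrcont f hfc hf0 hfvan
  set I : ℝ := ∫ z, Real.exp (-f z) ∂(lam.prod (μ.restrict {x | r ≤ dist x0 x})) with hI
  have hglim : Tendsto (fun n : ℕ => (n : ℝ) * g n) atTop (𝓝 (Λ⁻¹ * I)) := by
    refine (hglim0.const_mul Λ⁻¹).congr fun n => ?_
    rw [mul_left_comm]
    congr 1
    simp only [hg, hlam']
    rw [Measure.prod_smul_left, integral_smul_measure, ENNReal.toReal_inv, smul_eq_mul]
  have hpeq : ∀ n, p n = (ν {x | r ≤ dist x0 (s n x)}).toReal := fun n => by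
    have h1 : MeasurableSet {x | r ≤ dist x0 (s n x)} := hs n hG
    have h2 : p n = ∫ x, {x | r ≤ dist x0 (s n x)}.indicator (fun _ => (1 : ℝ)) x ∂ν := rfl
    rw [h2, integral_indicator h1]
    simp [Measure.real]
  have hp0 : ∀ n, 0 ≤ p n := fun n => by rw [hpeq]; exact ENNReal.toReal_nonneg
  have hp1 : ∀ n, p n ≤ 1 := fun n => by
    rw [hpeq]; exact ENNReal.toReal_mono ENNReal.one_ne_top prob_le_one
  have hg0 : ∀ n, 0 ≤ g n := fun n => integral_nonneg fun z =>
    Set.indicator_nonneg (fun z _ => hw0 n z) z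
  have hgi : ∀ n, Integrable ((Gn n).indicator (w n)) (lam'.prod ν) := fun n =>
    Integrable.of_bound (C := 1) ((hwm n).indicator (hGnm n)).aestronglyMeasurable
      (Eventually.of_forall fun z => (norm_indicator_le_norm_self _ _).trans (hwb n z))
  have hg1 : ∀ n, g n ≤ 1 := fun n => by
    have : g n ≤ ∫ z : T × X, (1 : ℝ) ∂(lam'.prod ν) := by
      refine integral_mono (hgi n) (integrable_const _) fun z => ?_
      exact Set.indicator_le' (fun z _ => hw1 n z) (fun _ _ => zero_le_one) z
    simpa using this
  have hcompl : ∀ n, ∫ z, (Gn n)ᶜ.indicator (w n) z ∂(lam'.prod ν) = 1 - p n := fun n => by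
    have h1 : (Gn n)ᶜ.indicator (w n) = (Gn n)ᶜ.indicator (fun _ => (1 : ℝ)) := by
      refine Set.indicator_congr fun z hz => ?_
      have : f (z.1, s n z.2) = 0 := hfvan _ _ (not_le.1 hz)
      simp [hw, this]
    rw [h1, integral_indicator (hGnm n).compl, hpeq]
    have h2 : (lam'.prod ν) (Gn n) = ν {x | r ≤ dist x0 (s n x)} := by
      have : Gn n = Set.univ ×ˢ {x | r ≤ dist x0 (s n x)} := by ext z; simp [hGn]
      rw [this, Measure.prod_prod, measure_univ, one_mul]
    have h3 := probReal_compl_eq_one_sub (μ := lam'.prod ν) (hGnm n)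
    simp only [Measure.real, h2] at h3
    simp [Measure.real, h3]
  have hmain := aux_series Λ hΛ.le k g p (Λ⁻¹ * I) _ hg0 hg1 hp0 hp1 hglim hplim
  rw [mul_inv_cancel_left₀ hΛ.ne'] at hmain
  refine hmain.congr fun n => ?_
  congr 1
  -- decomposition
  have hdec := aux_decomp (lam'.prod ν) P N hNmeas (fun i ω => (Tt i ω, Xx i ω))
    (fun i => (hTmeas i).prodMk (hXmeas i)) hlaw
    (fun j z => if k + 1 ≤ (Finset.univ.filter fun i => z i ∈ Gn n).card then
        ∏ i, w n (z i) else 0) ?_ ?_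
  · have hlhs : ∀ ω, (if k + 1 ≤ ((Finset.range (N ω)).filter
              (fun i => r ≤ dist x0 (σ (a n)⁻¹ (Xx i ω)))).card then
            Real.exp (-∑ i ∈ Finset.range (N ω), f (Tt i ω, σ (a n)⁻¹ (Xx i ω)))
          else 0) = (if k + 1 ≤ (Finset.univ.filter
            fun i : Fin (N ω) => (Tt i ω, Xx i ω) ∈ Gn n).card then
        ∏ i : Fin (N ω), w n (Tt i ω, Xx i ω) else 0) := by
      intro ω
      have h1 : ((Finset.range (N ω)).filter
              (fun i => r ≤ dist x0 (σ (a n)⁻¹ (Xx i ω)))).card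
          = (Finset.univ.filter fun i : Fin (N ω) => (Tt i ω, Xx i ω) ∈ Gn n).card := by
        rw [Finset.card_filter, Finset.card_filter, Finset.sum_range]
        rfl
      rw [h1, ← Finset.sum_neg_distrib, Real.exp_sum, Finset.prod_range]
    simp_rw [hlhs]
    rw [hdec]
    refine tsum_congr fun j => ?_
    rw [hPj j, aux_iid (lam'.prod ν) (Gn n) (hGnm n) (w n) (hwm n) (hwb n) j k, hcompl n]
  · intro j
    refine Measurable.ite ?_ ?_ measurable_const
    · have : Measurable fun z : Fin j → T × X => (Finset.univ.filter fun i => z i ∈ Gn n).card := by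
        simp_rw [Finset.card_filter]
        refine Finset.measurable_sum _ fun i _ => ?_
        exact Measurable.ite (measurable_pi_apply i (hGnm n)) measurable_const measurable_const
      exact measurableSet_le measurable_const this
    · exact Finset.measurable_prod _ fun i _ => (hwm n).comp (measurable_pi_apply i)
  · intro j z
    split_ifs
    · rw [Finset.abs_prod]
      exact Finset.prod_le_one (fun _ _ => abs_nonneg _) fun i _ => hwb n _
    · simp
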